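/- Let X be a real random variable with law ν having finite exponential moments, let β^(1),…,β^(n) be mutually independent standard Brownian bridges on [0,1], independent of X, let σ_1,…,σ_n > 0, and set ξ^(i)_t = t·X + σ_i β^(i)_t. Let J^(1),…,J^(n) : [0,1] → {0,1} be deterministic right-continuous functions with finitely many discontinuities, set τ^(i)_t = max(0, sup{u ∈ [0,t] : J^(i)(u) = 1}) (with sup ∅ = −∞), and let ℱ_t = σ(J^(i)(u)·ξ^(i)_u : 0 ≤ u ≤ t, 1 ≤ i ≤ n). Then for every t ∈ [0,1) and every bounded measurable φ : ℝ → ℝ, almost surely E[φ(X) | ℱ_t] = (∫ φ(x) ∏_{i=1}^n h(x, ξ^(i)_{τ^(i)_t}, τ^(i)_t, σ_i) ν(dx)) / (∫ ∏_{i=1}^n h(x, ξ^(i)_{τ^(i)_t}, τ^(i)_t, σ_i) ν(dx)), where for a source never active up to time t one has τ^(i)_t = 0, ξ^(i)_0 = 0 and h(x,0,0,σ_i) = 1. (Proposition 2.3 for a deterministic switching pattern.) -/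

import Mathlib

/-!
Write `r i = τ i t` for the last active times and `Y i = ξ i (r i)` for the last active values.

Every observation up to time `t` is a function of `Y` and of bridge residuals: for an active
`u ≤ r i`, `ξ_u = (u / r) ξ_r + σ (β_u - (u / r) β_r)`. The residuals are uncorrelated with `β_r`,
hence independent of it by joint Gaussianity (`IsStdBrownianBridge.indep_residual`), and so jointly
independent of `(X, Y)` by mutual independence of the sources (`indep_iSup_iSup_of_iIndep`).
Consequently an identity of integrals over the events of `σ(Y)` extends to the events of
`σ(Y) ⊔ σ(residuals)`, which contains the filtration (`setIntegral_eq_of_indep_sup`).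

Over the events of `σ(Y)` the identity is the finite-dimensional Bayes formula (`bayes_setIntegral`):
given `X = x`, the law of `Y` has density `∏ i, h(x, ·, r i, σ i)` with respect to the law of the
pure noises (`gaussianReal_eq_withDensity_hfun`, `map_prodMk_eq_withDensity`).

Finally the Bayes ratio is measurable for the filtration up to a null set. If source `i` was active
up to time `t`, then `Y i` is a limit of active observations at times tending to `r i`, by
continuity of the paths; otherwise `r i = 0` and `Y i = σ β_0` vanishes almost surely.
-/

open MeasureTheory ProbabilityTheory Real Set Filter
open scoped ENNReal NNReal Classical

noncomputable section

/-- The Gaussian likelihood function `h(x,y,t,σ) = exp((x·y − t·x²/2)/(σ²·(1−t)))`. -/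
def hfun (x y t σ : ℝ) : ℝ := Real.exp ((x * y - t * x ^ 2 / 2) / (σ ^ 2 * (1 - t)))

/-- A process is a centered Gaussian process on `[0,1]` with covariance function `c` if every
finite real-linear combination of its values at times in `[0,1]` is a centered Gaussian random
variable with the variance induced by `c`. -/
def IsCenteredGaussianCov {Ω : Type*} [MeasurableSpace Ω] (P : Measure Ω)
    (β : ℝ → Ω → ℝ) (c : ℝ → ℝ → ℝ) : Prop :=
  ∀ (k : ℕ) (t : Fin k → ℝ), (∀ i, t i ∈ Set.Icc (0:ℝ) 1) → ∀ a : Fin k → ℝ,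
    Measure.map (fun ω => ∑ i, a i * β (t i) ω) P
      = gaussianReal 0 (Real.toNNReal (∑ i, ∑ j, a i * a j * c (t i) (t j)))

/-- A standard Brownian bridge on `[0,1]`: a measurable, path-continuous, centered Gaussian
process with covariance `min s t − s·t`. -/
def IsStdBrownianBridge {Ω : Type*} [MeasurableSpace Ω] (P : Measure Ω)
    (β : ℝ → Ω → ℝ) : Prop :=
  (∀ t, Measurable (β t)) ∧
  (∀ ω, ContinuousOn (fun t => β t ω) (Set.Icc 0 1)) ∧
  IsCenteredGaussianCov P β (fun s t => min s t - s * t)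

/-- `ν` has finite exponential moments. -/
def FiniteExpMoments (ν : Measure ℝ) : Prop :=
  ∀ lam : ℝ, 0 < lam → Integrable (fun x => Real.exp (lam * |x|)) ν

/-- The σ-algebra generated by the observations `ξ_s`, `0 ≤ s ≤ t`. -/
def sigmaUpTo {Ω : Type*} [MeasurableSpace Ω] (ξ : ℝ → Ω → ℝ) (t : ℝ) : MeasurableSpace Ω :=
  ⨆ s ∈ Set.Icc (0:ℝ) t, MeasurableSpace.comap (ξ s) inferInstance

/-! ### The Brownian bridge and its residuals -/

section Bridge

variable {Ω : Type*} [MeasurableSpace Ω] {P : Measure Ω} [IsProbabilityMeasure P]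
  {β : ℝ → Ω → ℝ}

omit [IsProbabilityMeasure P] in
/-- Gaussianity of all real linear combinations of values (Cramér–Wold) puts the bridge in the
scope of the library's theory of Gaussian processes. -/
lemma IsStdBrownianBridge.isGaussianProcess (hβ : IsStdBrownianBridge P β) :
    IsGaussianProcess (fun (s : Set.Icc (0:ℝ) 1) => β s) P where
  hasGaussianLaw I := by
    constructor
    have hm : Measurable fun ω => I.restrict (fun s : Set.Icc (0:ℝ) 1 => β s ω) :=
      measurable_pi_lambda _ fun s => hβ.1 _
    apply isGaussian_of_map_eq_gaussianReal
    intro L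
    let e := I.equivFin
    have hL : ∀ x : I → ℝ, L x = ∑ k, L (Pi.single (e.symm k) 1) * x (e.symm k) := by
      intro x
      rw [Equiv.sum_comp e.symm (fun i => L (Pi.single i 1) * x i)]
      conv_lhs => rw [← Finset.univ_sum_single x, map_sum]
      refine Finset.sum_congr rfl fun i _ => ?_
      rw [show (Pi.single i (x i) : I → ℝ) = x i • Pi.single i 1 by
        rw [← Pi.single_smul]; simp, map_smul, smul_eq_mul, mul_comm]
    rw [Measure.map_map L.continuous.measurable hm]
    refine ⟨0, _, Eq.trans ?_ (hβ.2.2 I.card (fun k => (e.symm k : Set.Icc (0:ℝ) 1))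
      (fun k => (e.symm k : Set.Icc (0:ℝ) 1).2) (fun k => L (Pi.single (e.symm k) 1)))⟩
    congr 1
    ext ω
    simp only [Function.comp_apply]
    rw [hL]
    rfl

omit [IsProbabilityMeasure P] in
lemma IsStdBrownianBridge.map_eq (hβ : IsStdBrownianBridge P β) {s : ℝ}
    (hs : s ∈ Set.Icc (0:ℝ) 1) :
    Measure.map (β s) P = gaussianReal 0 (Real.toNNReal (s - s * s)) := by
  simpa using hβ.2.2 1 (fun _ => s) (fun _ => hs) (fun _ => 1)

omit [IsProbabilityMeasure P] in
lemma IsStdBrownianBridge.memLp_two (hβ : IsStdBrownianBridge P β) {s : ℝ}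
    (hs : s ∈ Set.Icc (0:ℝ) 1) : MemLp (β s) 2 P :=
  (hβ.isGaussianProcess.hasGaussianLaw_eval ⟨s, hs⟩).memLp_two

/-- The covariance is recovered from the variances of `β s`, `β r` and `β s + β r` by
polarization. -/
lemma IsStdBrownianBridge.covariance_eq (hβ : IsStdBrownianBridge P β) {s r : ℝ}
    (hs : s ∈ Set.Icc (0:ℝ) 1) (hr : r ∈ Set.Icc (0:ℝ) 1) :
    cov[β s, β r; P] = min s r - s * r := by
  have hvar : ∀ (Z : Ω → ℝ) (v : NNReal), Measurable Z → P.map Z = gaussianReal 0 v →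
      Var[Z; P] = v := by
    intro Z v hZ h
    rw [← variance_id_map hZ.aemeasurable, h, variance_id_gaussianReal]
  have h1 : ∀ u ∈ Set.Icc (0:ℝ) 1, Var[β u; P] = u - u * u := by
    intro u hu
    rw [hvar _ _ (hβ.1 u) (hβ.map_eq hu), Real.coe_toNNReal]
    nlinarith [hu.1, hu.2]
  have h2 : Var[β s + β r; P] = (s - s * s) + (r - r * r) + 2 * (min s r - s * r) := by
    have h := hβ.2.2 2 ![s, r] (by intro i; fin_cases i <;> assumption) (fun _ => 1)
    simp only [Fin.sum_univ_two, one_mul, Matrix.cons_val_zero, Matrix.cons_val_one,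
      min_self] at h
    rw [hvar (β s + β r) _ ((hβ.1 s).add (hβ.1 r)) h, Real.coe_toNNReal, min_comm r s]
    · ring
    · rcases le_total s r with h | h <;> simp only [h, min_eq_left, min_eq_right] <;>
        nlinarith [hs.1, hs.2, hr.1, hr.2]
  rw [variance_add (hβ.memLp_two hs) (hβ.memLp_two hr), h1 s hs, h1 r hr] at h2
  linarith

/-- For `s ≤ r` the residual `β s - (s / r) β r` is uncorrelated with `β r`, since
`Cov(β s, β r) = s (1 - r) = (s / r) Var(β r)`; joint Gaussianity turns this into independence of
`β r` from all residuals at once. For `r = 0` the only residual is `β 0` itself (as `0 / 0 = 0`),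
which is a.s. `0`. -/
lemma IsStdBrownianBridge.indep_residual (hβ : IsStdBrownianBridge P β) {r : ℝ}
    (hr : r ∈ Set.Ico (0:ℝ) 1) :
    Indep (MeasurableSpace.comap (β r) inferInstance)
      (⨆ s ∈ Set.Icc (0:ℝ) r,
        MeasurableSpace.comap (fun ω => β s ω - s / r * β r ω) inferInstance) P := by
  have hr' : r ∈ Set.Icc (0:ℝ) 1 := ⟨hr.1, hr.2.le⟩
  have hs' : ∀ s : Set.Icc (0:ℝ) r, (s : ℝ) ∈ Set.Icc (0:ℝ) 1 := fun s =>
    ⟨s.2.1, s.2.2.trans hr.2.le⟩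
  let U : Unit → Ω → ℝ := fun _ => β r
  let V : Set.Icc (0:ℝ) r → Ω → ℝ := fun s ω => β s ω - s / r * β r ω
  have hG : IsGaussianProcess (Sum.elim U V) P := by
    refine hβ.isGaussianProcess.of_isGaussianProcess ?_
    rintro (u | s)
    · refine ⟨{⟨r, hr'⟩}, ContinuousLinearMap.proj ⟨⟨r, hr'⟩, by simp⟩, fun ω => rfl⟩
    · refine ⟨{⟨s, hs' s⟩, ⟨r, hr'⟩},
        ContinuousLinearMap.proj ⟨⟨s, hs' s⟩, by simp⟩
          - ((s : ℝ) / r) • ContinuousLinearMap.proj ⟨⟨r, hr'⟩, by simp⟩, fun ω => rfl⟩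
  have hI := hG.indepFun_of_covariance_eq_zero (fun _ => (hβ.1 r).aemeasurable)
    (fun s => ((hβ.1 s).sub ((hβ.1 r).const_mul _)).aemeasurable) (by
      intro _ s
      simp only [U, V]
      rw [covariance_fun_sub_right (hβ.memLp_two hr') (hβ.memLp_two (hs' s))
        ((hβ.memLp_two hr').const_mul _), covariance_const_mul_right,
        hβ.covariance_eq hr' (hs' s), hβ.covariance_eq hr' hr', min_self, min_eq_right s.2.2]
      rcases eq_or_lt_of_le hr.1 with h0 | h0
      · have : (s : ℝ) = 0 := le_antisymm (h0 ▸ s.2.2) s.2.1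
        simp [this]
      · field_simp
        ring)
  rw [IndepFun_iff_Indep] at hI
  refine indep_of_indep_of_le_left (indep_of_indep_of_le_right hI ?_) ?_
  · refine iSup₂_le fun s hs => ?_
    have : (fun ω => β s ω - s / r * β r ω)
        = (fun f : Set.Icc (0:ℝ) r → ℝ => f ⟨s, hs⟩) ∘ (fun ω s => V s ω) := rfl
    rw [this, ← MeasurableSpace.comap_comp]
    exact MeasurableSpace.comap_mono (measurable_pi_apply _).comap_le
  · have : β r = (fun f : Unit → ℝ => f ()) ∘ (fun ω s => U s ω) := rfl
    rw [this, ← MeasurableSpace.comap_comp]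
    exact MeasurableSpace.comap_mono (measurable_pi_apply _).comap_le

end Bridge

/-! ### Independence of suprema of σ-algebras -/

section IndepSup

/-- If the `m i` are mutually independent and each `m i` contains two independent sub-σ-algebras
`a i` and `b i`, then the `a i` together are independent of the `b i` together. Both suprema are
generated by the π-systems of finite intersections, on which the claim is a product formula. -/
lemma indep_iSup_iSup_of_iIndep {Ω ι : Type*} [Fintype ι] {mΩ : MeasurableSpace Ω} {P : Measure Ω}
    [IsProbabilityMeasure P] {m a b : ι → MeasurableSpace Ω} (hm : iIndep m P)
    (hmle : ∀ i, m i ≤ mΩ) (ha : ∀ i, a i ≤ m i) (hb : ∀ i, b i ≤ m i)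
    (hab : ∀ i, Indep (a i) (b i) P) : Indep (⨆ i, a i) (⨆ i, b i) P := by
  have hgen : ∀ c : ι → MeasurableSpace Ω, MeasurableSpace.generateFrom
      (piiUnionInter (fun i => {s | MeasurableSet[c i] s}) Set.univ) = ⨆ i, c i := by
    intro c
    exact (generateFrom_piiUnionInter_measurableSet c Set.univ).trans (by simp)
  have hpi : ∀ c : ι → MeasurableSpace Ω, IsPiSystem
      (piiUnionInter (fun i => {s | MeasurableSet[c i] s}) Set.univ) :=
    fun c => isPiSystem_piiUnionInter _ (fun i => @MeasurableSpace.isPiSystem_measurableSet _ (c i)) _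
  have hrep : ∀ (c : ι → MeasurableSpace Ω),
      ∀ t ∈ piiUnionInter (fun i => {s | MeasurableSet[c i] s}) Set.univ,
      ∃ f : ι → Set Ω, (∀ i, MeasurableSet[c i] (f i)) ∧ t = ⋂ i, f i := by
    rintro c t ⟨T, -, f, hf, rfl⟩
    refine ⟨fun i => if i ∈ T then f i else Set.univ, fun i => ?_, ?_⟩
    · by_cases h : i ∈ T
      · simpa [h] using hf i h
      · simp [h]
    · ext ω
      simp only [Set.mem_iInter]
      refine ⟨fun h i => ?_, fun h i hi => by simpa [hi] using h i⟩
      by_cases hi : i ∈ T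
      · simpa [hi] using h i hi
      · simp [hi]
  have hprod : ∀ f : ι → Set Ω, (∀ i, MeasurableSet[m i] (f i)) → P (⋂ i, f i) = ∏ i, P (f i) := by
    intro f hf
    simpa using (iIndep_iff m P).1 hm Finset.univ (fun i _ => hf i)
  refine IndepSets.indep (iSup_le fun i => (ha i).trans (hmle i))
    (iSup_le fun i => (hb i).trans (hmle i)) (hpi a) (hpi b) (hgen a).symm (hgen b).symm ?_
  rw [IndepSets_iff]
  intro s t hs ht
  obtain ⟨f, hf, rfl⟩ := hrep a s hs
  obtain ⟨g, hg, rfl⟩ := hrep b t ht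
  rw [← Set.iInter_inter_distrib, hprod _ fun i => (ha i _ (hf i)).inter (hb i _ (hg i)),
    hprod _ fun i => ha i _ (hf i), hprod _ fun i => hb i _ (hg i), ← Finset.prod_mul_distrib]
  exact Finset.prod_congr rfl fun i _ => (Indep_iff _ _ P).1 (hab i) _ _ (hf i) (hg i)

/-- If `f` and `g` have equal integrals over the sets of `m𝒴` and are measurable with respect to a
larger `m𝒜`, then they have equal integrals over the sets of `m𝒴 ⊔ mR` for every `mR` independent
of `m𝒜`: on a rectangle `a ∩ b` both integrals acquire the factor `P b`. -/
lemma setIntegral_eq_of_indep_sup {Ω : Type*} {mΩ : MeasurableSpace Ω} {P : Measure Ω}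
    [IsProbabilityMeasure P] {m𝒜 m𝒴 mR : MeasurableSpace Ω} (h𝒜 : m𝒜 ≤ mΩ) (h𝒴 : m𝒴 ≤ m𝒜)
    (hR : mR ≤ mΩ) (hind : Indep m𝒜 mR P) {f g : Ω → ℝ} (hf : Measurable[m𝒜] f)
    (hg : Measurable[m𝒜] g) (hfi : Integrable f P) (hgi : Integrable g P)
    (hfg : ∀ s, MeasurableSet[m𝒴] s → ∫ ω in s, f ω ∂P = ∫ ω in s, g ω ∂P) :
    ∀ s, MeasurableSet[m𝒴 ⊔ mR] s → ∫ ω in s, f ω ∂P = ∫ ω in s, g ω ∂P := by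
  have h𝒴R : m𝒴 ⊔ mR ≤ mΩ := sup_le (h𝒴.trans h𝒜) hR
  have hmul : ∀ k : Ω → ℝ, Measurable[m𝒜] k → ∀ a b, MeasurableSet[m𝒴] a → MeasurableSet[mR] b →
      ∫ ω in a ∩ b, k ω ∂P = P.real b * ∫ ω in a, k ω ∂P := by
    intro k hk a b ha hb
    have hk' : Measurable[m𝒜] (a.indicator k) := hk.indicator (h𝒴 _ ha)
    have hk'' : Measurable[mΩ] (a.indicator k) := fun u hu => h𝒜 _ (hk' hu)
    have := Indep.setIntegral_eq_mul (P := P) hR (f := id) (X := a.indicator k) (A := b)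
      (indep_of_indep_of_le_right hind.symm hk'.comap_le) (@Measurable.aemeasurable _ _ mΩ _ _ P hk'') hb
      aestronglyMeasurable_id
    simp only [id] at this
    rw [setIntegral_indicator (h𝒜 _ (h𝒴 _ ha)), integral_indicator (h𝒜 _ (h𝒴 _ ha))] at this
    rw [Set.inter_comm, this]
  have hgen : m𝒴 ⊔ mR = MeasurableSpace.generateFrom
      {s | ∃ a b, MeasurableSet[m𝒴] a ∧ MeasurableSet[mR] b ∧ a ∩ b = s} := by
    apply le_antisymm
    · refine sup_le (fun a ha => ?_) (fun b hb => ?_)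
      · exact MeasurableSpace.measurableSet_generateFrom ⟨a, Set.univ, ha, MeasurableSet.univ, by simp⟩
      · exact MeasurableSpace.measurableSet_generateFrom ⟨Set.univ, b, MeasurableSet.univ, hb, by simp⟩
    · refine MeasurableSpace.generateFrom_le ?_
      rintro _ ⟨a, b, ha, hb, rfl⟩
      exact (le_sup_left (a := m𝒴) (b := mR) _ ha).inter (le_sup_right (a := m𝒴) (b := mR) _ hb)
  have hpi : IsPiSystem {s | ∃ a b, MeasurableSet[m𝒴] a ∧ MeasurableSet[mR] b ∧ a ∩ b = s} := by
    rintro _ ⟨a, b, ha, hb, rfl⟩ _ ⟨a', b', ha', hb', rfl⟩ -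
    exact ⟨a ∩ a', b ∩ b', ha.inter ha', hb.inter hb', by ac_rfl⟩
  intro s hs
  induction s, hs using MeasurableSpace.induction_on_inter hgen hpi with
  | empty => simp
  | basic s hs =>
    obtain ⟨a, b, ha, hb, rfl⟩ := hs
    rw [hmul f hf a b ha hb, hmul g hg a b ha hb, hfg a ha]
  | compl s hs ih =>
    have hu := hfg Set.univ MeasurableSet.univ
    simp only [Measure.restrict_univ] at hu
    rw [setIntegral_compl (h𝒴R _ hs) hfi, setIntegral_compl (h𝒴R _ hs) hgi, ih, hu]
  | iUnion s hd hs ih =>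
    rw [integral_iUnion (fun i => h𝒴R _ (hs i)) hd hfi.integrableOn,
      integral_iUnion (fun i => h𝒴R _ (hs i)) hd hgi.integrableOn]
    simp_rw [ih]

end IndepSup

/-! ### Gaussian likelihoods and the finite-dimensional Bayes formula -/

section Bayes

/-- The function `h(x, ·, t, σ)` is the density of the law of `t x + σ β_t` with respect to the law
of `σ β_t`. At `t = 0` both laws are the Dirac mass at `0` and `h(x, 0, 0, σ) = 1`. -/
lemma gaussianReal_eq_withDensity_hfun (x : ℝ) {t σ : ℝ} (ht : t ∈ Set.Ico (0:ℝ) 1) (hσ : 0 < σ) :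
    gaussianReal (t * x) (Real.toNNReal (σ ^ 2 * (t - t * t))) =
      (gaussianReal 0 (Real.toNNReal (σ ^ 2 * (t - t * t)))).withDensity
        (fun y => ENNReal.ofReal (hfun x y t σ)) := by
  have hmeas : Measurable fun y => ENNReal.ofReal (hfun x y t σ) := by
    unfold hfun; fun_prop
  rcases eq_or_lt_of_le ht.1 with h0 | h0
  · subst h0
    have h1 : hfun x 0 0 σ = 1 := by simp [hfun]
    simp only [zero_mul, sub_zero, mul_zero, Real.toNNReal_zero, gaussianReal_zero_var]
    ext s hs
    rw [withDensity_apply _ hs, Measure.dirac_apply' _ hs, setLIntegral_dirac' hmeas hs, h1]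
    by_cases h : (0:ℝ) ∈ s <;> simp [h]
  · have hv : 0 < σ ^ 2 * (t - t * t) := by
      have : 0 < t - t * t := by nlinarith [ht.2]
      positivity
    have hv' : Real.toNNReal (σ ^ 2 * (t - t * t)) ≠ 0 := by simpa using hv
    rw [gaussianReal_of_var_ne_zero _ hv', gaussianReal_of_var_ne_zero _ hv',
      ← withDensity_mul _ (measurable_gaussianPDF _ _) hmeas]
    congr 1
    ext y
    simp only [Pi.mul_apply, gaussianPDF]
    rw [← ENNReal.ofReal_mul (gaussianPDFReal_nonneg _ _ _)]
    congr 1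
    simp only [gaussianPDFReal, hfun, Real.coe_toNNReal _ hv.le]
    rw [mul_assoc _ (rexp _) (rexp _), ← Real.exp_add]
    congr 2
    have h1 : (1 - t) ≠ 0 := by linarith [ht.2]
    have h2 : t - t * t ≠ 0 := by nlinarith [ht.2]
    have h3 : t - t * t = t * (1 - t) := by ring
    rw [h3]
    field_simp
    ring

lemma hfun_nonneg (x y t σ : ℝ) : 0 ≤ hfun x y t σ := (Real.exp_pos _).le

/-- The joint likelihood `∏ i, h(x, y i, r i, σ i)` of the signal value `x`, given the values `y i`
of the information processes at the times `r i`. -/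
def likelihood {n : ℕ} (r σ : Fin n → ℝ) (x : ℝ) (y : Fin n → ℝ) : ℝ :=
  ∏ i, hfun x (y i) (r i) (σ i)

variable {n : ℕ} {r σ : Fin n → ℝ}

lemma likelihood_pos (x : ℝ) (y : Fin n → ℝ) : 0 < likelihood r σ x y :=
  Finset.prod_pos fun _ _ => Real.exp_pos _

lemma measurable_likelihood : Measurable fun p : ℝ × (Fin n → ℝ) => likelihood r σ p.1 p.2 := by
  unfold likelihood hfun
  fun_prop

lemma pi_gaussianReal_eq_withDensity (x : ℝ) (hr : ∀ i, r i ∈ Set.Ico (0:ℝ) 1)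
    (hσ : ∀ i, 0 < σ i) :
    Measure.pi (fun i => gaussianReal (r i * x) (Real.toNNReal (σ i ^ 2 * (r i - r i * r i)))) =
      (Measure.pi (fun i => gaussianReal 0 (Real.toNNReal (σ i ^ 2 * (r i - r i * r i))))).withDensity
        (fun y => ENNReal.ofReal (likelihood r σ x y)) := by
  refine Measure.pi_eq fun s hs => ?_
  have hmeas : ∀ i, Measurable fun y => ENNReal.ofReal (hfun x y (r i) (σ i)) := by
    intro i; unfold hfun; fun_prop
  rw [withDensity_apply _ (MeasurableSet.univ_pi hs),
    ← lintegral_indicator (MeasurableSet.univ_pi hs)]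
  have h1 : ∀ y : Fin n → ℝ, (Set.univ.pi s).indicator
      (fun y => ENNReal.ofReal (likelihood r σ x y)) y =
      ∏ i, (s i).indicator (fun z => ENNReal.ofReal (hfun x z (r i) (σ i))) (y i) := by
    intro y
    by_cases hy : y ∈ Set.univ.pi s
    · rw [Set.indicator_of_mem hy, likelihood,
        ENNReal.ofReal_prod_of_nonneg fun i _ => hfun_nonneg _ _ _ _]
      exact Finset.prod_congr rfl fun i _ => (Set.indicator_of_mem (hy i (Set.mem_univ i))
          (fun z => ENNReal.ofReal (hfun x z (r i) (σ i)))).symm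
    · rw [Set.indicator_of_notMem hy]
      simp only [Set.mem_pi, Set.mem_univ, true_imp_iff, not_forall] at hy
      obtain ⟨i, hi⟩ := hy
      exact (Finset.prod_eq_zero (Finset.mem_univ i) (Set.indicator_of_notMem hi _)).symm
  simp_rw [h1]
  rw [lintegral_prod_eq_prod_lintegral_of_indepFun Finset.univ _
    (iIndepFun_pi fun i => ((hmeas i).indicator (hs i)).aemeasurable)
    fun i => ((hmeas i).indicator (hs i)).comp (measurable_pi_apply i)]
  refine Finset.prod_congr rfl fun i _ => ?_
  rw [gaussianReal_eq_withDensity_hfun x (hr i) (hσ i), withDensity_apply _ (hs i),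
    ← lintegral_indicator (hs i)]
  exact (measurePreserving_eval
    (fun i => gaussianReal 0 (Real.toNNReal (σ i ^ 2 * (r i - r i * r i)))) i).lintegral_comp
    ((hmeas i).indicator (hs i))

/-- When `X` and the bridge values are independent, the joint law of `X` and the observations
`r i * X + σ i * W i` has density `likelihood` with respect to the product of the law of `X` and the
laws of the pure noises `σ i * W i`. -/
lemma map_prodMk_eq_withDensity {Ω : Type*} [MeasurableSpace Ω] {P : Measure Ω}
    (hr : ∀ i, r i ∈ Set.Ico (0:ℝ) 1) (hσ : ∀ i, 0 < σ i)
    {ν : Measure ℝ} [IsProbabilityMeasure ν] {X : Ω → ℝ} {W : Fin n → Ω → ℝ}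
    (hX : Measurable X) (hW : ∀ i, Measurable (W i))
    (hXW : P.map (fun ω => (X ω, fun i => W i ω)) =
      ν.prod (Measure.pi fun i => gaussianReal 0 (Real.toNNReal (r i - r i * r i)))) :
    P.map (fun ω => (X ω, fun i => r i * X ω + σ i * W i ω)) =
      (ν.prod (Measure.pi fun i =>
        gaussianReal 0 (Real.toNNReal (σ i ^ 2 * (r i - r i * r i))))).withDensity
          (fun p => ENNReal.ofReal (likelihood r σ p.1 p.2)) := by
  set T : ℝ × (Fin n → ℝ) → ℝ × (Fin n → ℝ) := fun p => (p.1, fun i => r i * p.1 + σ i * p.2 i)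
    with hT
  have hTm : Measurable T := by fun_prop
  have hXWm : Measurable fun ω => (X ω, fun i => W i ω) :=
    hX.prodMk (measurable_pi_lambda _ hW)
  have h1 : P.map (fun ω => (X ω, fun i => r i * X ω + σ i * W i ω)) =
      (P.map (fun ω => (X ω, fun i => W i ω))).map T := by
    rw [Measure.map_map hTm hXWm]; rfl
  have h2 : ∀ x, (Measure.pi fun i => gaussianReal 0 (Real.toNNReal (r i - r i * r i))).map
      (fun w i => r i * x + σ i * w i) =
      Measure.pi (fun i =>
        gaussianReal (r i * x) (Real.toNNReal (σ i ^ 2 * (r i - r i * r i)))) := by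
    intro x
    have h : ∀ i, (gaussianReal 0 (Real.toNNReal (r i - r i * r i))).map
        (fun z => r i * x + σ i * z) =
        gaussianReal (r i * x) (Real.toNNReal (σ i ^ 2 * (r i - r i * r i))) := by
      intro i
      have hc : (fun z => r i * x + σ i * z) = (fun z => r i * x + z) ∘ (fun z => σ i * z) := rfl
      rw [hc, ← Measure.map_map (by fun_prop) (by fun_prop), gaussianReal_map_const_mul,
        gaussianReal_map_const_add, mul_zero, zero_add, Real.toNNReal_mul (sq_nonneg _)]
      congr 2
      exact (Real.toNNReal_of_nonneg (sq_nonneg _)).symm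
    have := fun i => h i ▸ (inferInstance : SigmaFinite
      (gaussianReal (r i * x) (Real.toNNReal (σ i ^ 2 * (r i - r i * r i)))))
    rw [Measure.pi_map_pi (f := fun i z => r i * x + σ i * z) (hμ := this)
      (fun i => by fun_prop)]
    simp_rw [h]
  rw [h1, hXW]
  ext S hS
  rw [Measure.map_apply hTm hS, Measure.prod_apply (hTm hS), withDensity_apply _ hS,
    ← lintegral_indicator hS, lintegral_prod _
      ((measurable_likelihood.ennreal_ofReal.indicator hS).aemeasurable)]
  refine lintegral_congr fun x => ?_
  have hSx : MeasurableSet (Prod.mk x ⁻¹' S) := measurable_prodMk_left hS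
  have h3 : Prod.mk x ⁻¹' (T ⁻¹' S) = (fun (w : Fin n → ℝ) i => r i * x + σ i * w i) ⁻¹' (Prod.mk x ⁻¹' S) :=
    rfl
  rw [h3, ← Measure.map_apply (by fun_prop) hSx, h2, pi_gaussianReal_eq_withDensity x hr hσ,
    withDensity_apply _ hSx, ← lintegral_indicator hSx]
  rfl

section

variable {E : Type*} [MeasurableSpace E] {ν : Measure ℝ} {H : ℝ → E → ℝ} {φ : ℝ → ℝ} {C : ℝ}

omit [MeasurableSpace E] in
/-- The Bayes ratio is bounded by `C` at every `y`: if `H · y` fails to be integrable, the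
denominator is `0` and so is the ratio. -/
lemma abs_bayesRatio_le (hpos : ∀ x y, 0 < H x y) (hφb : ∀ x, |φ x| ≤ C) (y : E) :
    |(∫ x, φ x * H x y ∂ν) / (∫ x, H x y ∂ν)| ≤ C := by
  have hC : 0 ≤ C := (abs_nonneg _).trans (hφb 0)
  by_cases hi : Integrable (fun x => H x y) ν
  · have hN : 0 ≤ ∫ x, H x y ∂ν := integral_nonneg fun x => (hpos x y).le
    rw [abs_div, abs_of_nonneg hN]
    refine div_le_of_le_mul₀ hN hC ?_
    rw [← integral_const_mul]
    refine (norm_integral_le_of_norm_le (f := fun x => φ x * H x y) (hi.const_mul C)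
      (ae_of_all _ fun x => ?_) :)
    rw [Real.norm_eq_abs, abs_mul, abs_of_pos (hpos x y)]
    exact mul_le_mul_of_nonneg_right (hφb x) (hpos x y).le
  · simpa [integral_undef hi] using hC

lemma measurable_bayesRatio [SFinite ν] (hH : Measurable fun p : ℝ × E => H p.1 p.2)
    (hφm : Measurable φ) :
    Measurable fun y => (∫ x, φ x * H x y ∂ν) / (∫ x, H x y ∂ν) := by
  refine Measurable.div ?_ ?_
  · exact (StronglyMeasurable.integral_prod_left'
      ((hφm.comp measurable_fst).mul hH).stronglyMeasurable).measurable
  · exact (StronglyMeasurable.integral_prod_left' hH.stronglyMeasurable).measurable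

/-- Bayes' formula in integrated form: under the joint law of density `H`, the ratio has the same
integral as `φ` over every event depending on the second coordinate. Integrability of `H · y` is
needed, and by Fubini holds, only for almost every `y`. -/
lemma bayes_setIntegral [IsProbabilityMeasure ν]
    {γ : Measure E} [IsProbabilityMeasure γ]
    (hH : Measurable fun p : ℝ × E => H p.1 p.2) (hpos : ∀ x y, 0 < H x y)
    {μ : Measure (ℝ × E)} [IsProbabilityMeasure μ]
    (hμ : μ = (ν.prod γ).withDensity fun p => ENNReal.ofReal (H p.1 p.2))
    (hφm : Measurable φ) (hφb : ∀ x, |φ x| ≤ C) {B : Set E}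
    (hB : MeasurableSet B) :
    ∫ p in Prod.snd ⁻¹' B, φ p.1 ∂μ =
      ∫ p in Prod.snd ⁻¹' B, (∫ x, φ x * H x p.2 ∂ν) / (∫ x, H x p.2 ∂ν) ∂μ := by
  have hB' : MeasurableSet (Prod.snd ⁻¹' B : Set (ℝ × E)) := measurable_snd hB
  have key : ∀ F : ℝ × E → ℝ, Measurable F → (∀ p, |F p| ≤ C) →
      ∫ p in Prod.snd ⁻¹' B, F p ∂μ = ∫ y in B, ∫ x, H x y * F (x, y) ∂ν ∂γ := by
    intro F hF hFC
    have hi : Integrable ((Prod.snd ⁻¹' B).indicator F) μ :=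
      (Integrable.of_bound hF.aestronglyMeasurable C (ae_of_all _ hFC)).indicator hB'
    rw [hμ, integrable_withDensity_iff_integrable_smul' hH.ennreal_ofReal (by simp)] at hi
    rw [← integral_indicator hB', hμ,
      integral_withDensity_eq_integral_toReal_smul hH.ennreal_ofReal (by simp),
      integral_prod_symm _ hi, ← integral_indicator hB]
    congr 1
    ext y
    by_cases hy : y ∈ B
    · rw [Set.indicator_of_mem hy]
      congr 1
      ext x
      rw [Set.indicator_of_mem (by exact hy), smul_eq_mul, ENNReal.toReal_ofReal (hpos x y).le]
    · rw [Set.indicator_of_notMem hy]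
      convert integral_zero ℝ ℝ with x
      rw [Set.indicator_of_notMem (by exact hy), smul_zero]
  rw [key (fun p => φ p.1) (hφm.comp measurable_fst) fun p => hφb _,
    key (fun p => (∫ x, φ x * H x p.2 ∂ν) / (∫ x, H x p.2 ∂ν))
      ((measurable_bayesRatio hH hφm).comp measurable_snd)
      fun p => abs_bayesRatio_le hpos hφb p.2]
  have hHi : Integrable (fun p : ℝ × E => H p.1 p.2) (ν.prod γ) := by
    have h1 : Integrable (fun _ => (1:ℝ)) μ := integrable_const _
    rw [hμ, integrable_withDensity_iff_integrable_smul' hH.ennreal_ofReal (by simp)] at h1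
    refine h1.congr (ae_of_all _ fun p => ?_)
    simp [ENNReal.toReal_ofReal (hpos p.1 p.2).le]
  refine integral_congr_ae (ae_restrict_of_ae ?_)
  filter_upwards [hHi.prod_left_ae] with y hy
  have hN : 0 < ∫ x, H x y ∂ν := by
    rw [integral_pos_iff_support_of_nonneg (fun x => (hpos x y).le) hy,
      Function.support_eq_univ fun x => (hpos x y).ne']
    simp
  rw [integral_mul_const, mul_div_cancel₀ _ hN.ne']
  simp_rw [mul_comm (H _ y)]

end

end Bayes

/-! ### The joint law of the signal and the noises -/

/-- The sources of randomness are independent σ-algebras indexed by `Option (Fin n)`; here they are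
converted into a product law for `X` (index `none`) and the `W i` (index `some i`). -/
lemma map_prodMk_eq_prod_pi {Ω : Type*} [m0 : MeasurableSpace Ω] {P : Measure Ω}
    [IsProbabilityMeasure P] {n : ℕ} {X : Ω → ℝ} (hX : Measurable X) {W : Fin n → Ω → ℝ}
    (hW : ∀ i, Measurable (W i)) {m : Option (Fin n) → MeasurableSpace Ω} (hm : iIndep m P)
    (hmle : ∀ j, m j ≤ m0) (hXm : MeasurableSpace.comap X inferInstance ≤ m none)
    (hWm : ∀ i, MeasurableSpace.comap (W i) inferInstance ≤ m (some i)) :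
    P.map (fun ω => (X ω, fun i => W i ω)) =
      (P.map X).prod (Measure.pi fun i => P.map (W i)) := by
  have hWi : iIndepFun W P := by
    rw [iIndepFun_iff]
    intro S f hf
    exact (iIndep_iff _ P).1 (hm.precomp (Option.some_injective _)) S
      (fun i hi => hWm i _ (hf i hi))
  have hXW : IndepFun X (fun ω i => W i ω) P := by
    rw [IndepFun_iff_Indep]
    refine indep_of_indep_of_le_left (indep_of_indep_of_le_right
      (indep_iSup_of_disjoint hmle hm (S := {none}) (T := Set.range some) (by simp)) ?_) ?_
    · simp only [MeasurableSpace.pi, MeasurableSpace.comap_iSup, MeasurableSpace.comap_comp]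
      exact iSup_le fun i => (hWm i).trans (le_iSup₂_of_le (some i) ⟨i, rfl⟩ le_rfl)
    · exact hXm.trans (le_iSup₂_of_le none rfl le_rfl)
  rw [hXW.map_prod_eq_prod_map_map hX.aemeasurable (measurable_pi_lambda _ hW).aemeasurable,
    hWi.map_fun_eq_pi_map fun i => (hW i).aemeasurable]

/-! ### The conditional distribution -/

/-- Proposition 2.3 for a deterministic switching pattern.
Given modulated observations `J⁽ⁱ⁾(u)·ξ⁽ⁱ⁾_u`, `u ≤ t`, the conditional expectation of `φ(X)`
is the Bayes ratio built from the last active values `ξ⁽ⁱ⁾_{τ⁽ⁱ⁾_t}` at the last active times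
`τ⁽ⁱ⁾_t = max(0, sup{u ≤ t : J⁽ⁱ⁾(u) = 1})`. -/
theorem modulated_conditional_distribution
    {Ω : Type*} [m0 : MeasurableSpace Ω] (P : Measure Ω) [IsProbabilityMeasure P]
    (n : ℕ) (X : Ω → ℝ) (hX : Measurable X)
    (ν : Measure ℝ) [IsProbabilityMeasure ν] (hlaw : Measure.map X P = ν)
    (hν : FiniteExpMoments ν)
    (β : Fin n → ℝ → Ω → ℝ) (hβ : ∀ i, IsStdBrownianBridge P (β i))
    (hindep : iIndep (fun j : Option (Fin n) =>
        Option.rec (MeasurableSpace.comap X inferInstance)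
          (fun i => sigmaUpTo (β i) 1) j) P)
    (σ : Fin n → ℝ) (hσ : ∀ i, 0 < σ i)
    (ξ : Fin n → ℝ → Ω → ℝ) (hξ : ∀ i s ω, ξ i s ω = s * X ω + σ i * β i s ω)
    (J : Fin n → ℝ → ℝ)
    (hJ01 : ∀ i s, J i s = 0 ∨ J i s = 1)
    (hrc : ∀ i s, ContinuousWithinAt (J i) (Set.Ici s) s)
    (D : Finset ℝ) (hD : ∀ i, ∀ s ∉ D, ContinuousAt (J i) s)
    (τ : Fin n → ℝ → ℝ)
    (hτ : ∀ i t, τ i t = max 0 (sSup {u ∈ Set.Icc (0:ℝ) t | J i u = 1}))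
    (φ : ℝ → ℝ) (hφm : Measurable φ) (C : ℝ) (hφb : ∀ x, |φ x| ≤ C) :
    ∀ t ∈ Set.Ico (0:ℝ) 1,
      P[fun ω => φ (X ω) |
          ⨆ i, ⨆ u ∈ Set.Icc (0:ℝ) t,
            MeasurableSpace.comap (fun ω => J i u * ξ i u ω) inferInstance]
        =ᵐ[P] fun ω =>
          (∫ x, φ x * ∏ i, hfun x (ξ i (τ i t) ω) (τ i t) (σ i) ∂ν) /
            (∫ x, ∏ i, hfun x (ξ i (τ i t) ω) (τ i t) (σ i) ∂ν) := by
  intro t ht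
  set r : Fin n → ℝ := fun i => τ i t with hr_def
  have hbdd : ∀ i, BddAbove {u ∈ Set.Icc (0:ℝ) t | J i u = 1} :=
    fun i => ⟨t, fun u hu => hu.1.2⟩
  have hrt : ∀ i, r i ≤ t := fun i => by
    simp only [hr_def, hτ]
    exact max_le ht.1 (Real.sSup_le (fun u hu => hu.1.2) ht.1)
  have hr0 : ∀ i, 0 ≤ r i := fun i => by simp only [hr_def, hτ]; exact le_max_left _ _
  have hr : ∀ i, r i ∈ Set.Ico (0:ℝ) 1 := fun i => ⟨hr0 i, (hrt i).trans_lt ht.2⟩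
  have hr1 : ∀ i, r i ∈ Set.Icc (0:ℝ) 1 := fun i => ⟨hr0 i, (hr i).2.le⟩
  have hur : ∀ i, ∀ u ∈ Set.Icc (0:ℝ) t, J i u = 1 → u ≤ r i := fun i u hu hJ => by
    simp only [hr_def, hτ]
    exact (le_csSup (hbdd i) ⟨hu, hJ⟩).trans (le_max_right _ _)
  have hξm : ∀ i s, Measurable (ξ i s) := fun i s => by
    have : ξ i s = fun ω => s * X ω + σ i * β i s ω := funext (hξ i s)
    rw [this]
    exact (hX.const_mul _).add (((hβ i).1 s).const_mul _)
  set W : Fin n → Ω → ℝ := fun i => β i (r i) with hW_def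
  have hWm : ∀ i, Measurable (W i) := fun i => (hβ i).1 _
  set Y : Ω → Fin n → ℝ := fun ω i => ξ i (r i) ω with hY_def
  have hYm : Measurable Y := measurable_pi_lambda _ fun i => hξm i _
  set G : (Fin n → ℝ) → ℝ := fun y =>
    (∫ x, φ x * likelihood r σ x y ∂ν) / (∫ x, likelihood r σ x y ∂ν) with hG_def
  have hGm : Measurable G := measurable_bayesRatio measurable_likelihood hφm
  have hGb : ∀ y, |G y| ≤ C := abs_bayesRatio_le likelihood_pos hφb
  set m : Option (Fin n) → MeasurableSpace Ω := fun j =>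
    Option.rec (MeasurableSpace.comap X inferInstance) (fun i => sigmaUpTo (β i) 1) j with hm_def
  have hmle : ∀ j, m j ≤ m0 := by
    rintro (_ | i)
    · exact hX.comap_le
    · exact iSup₂_le fun s _ => ((hβ i).1 s).comap_le
  have hβle : ∀ i, ∀ s ∈ Set.Icc (0:ℝ) 1, MeasurableSpace.comap (β i s) inferInstance ≤ m (some i) :=
    fun i s hs => le_iSup₂_of_le (f := fun s _ => MeasurableSpace.comap (β i s) inferInstance)
      s hs le_rfl
  -- The residuals generate what the observations up to time `r i` contain beyond `β i (r i)`.
  let mRes : Fin n → MeasurableSpace Ω := fun i => ⨆ s ∈ Set.Icc (0:ℝ) (r i),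
    MeasurableSpace.comap (fun ω => β i s ω - s / r i * β i (r i) ω) inferInstance
  let a : Option (Fin n) → MeasurableSpace Ω := fun j =>
    Option.rec (MeasurableSpace.comap X inferInstance)
      (fun i => MeasurableSpace.comap (W i) inferInstance) j
  let b : Option (Fin n) → MeasurableSpace Ω := fun j => Option.rec ⊥ mRes j
  have ha : ∀ j, a j ≤ m j := by
    rintro (_ | i)
    · exact le_rfl
    · exact hβle i _ (hr1 i)
  have hb : ∀ j, b j ≤ m j := by
    rintro (_ | i)
    · exact bot_le
    · refine iSup₂_le fun s hs => ?_
      have h1 : Measurable[m (some i)] (β i s) :=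
        measurable_iff_comap_le.2 (hβle i s ⟨hs.1, hs.2.trans (hr1 i).2⟩)
      have h2 : Measurable[m (some i)] (β i (r i)) :=
        measurable_iff_comap_le.2 (hβle i _ (hr1 i))
      exact (h1.sub (h2.const_mul _)).comap_le
  have hind : Indep (⨆ j, a j) (⨆ j, b j) P := by
    refine indep_iSup_iSup_of_iIndep hindep hmle ha hb ?_
    rintro (_ | i)
    · exact indep_bot_right _
    · exact (hβ i).indep_residual (hr i)
  have h𝒜 : (⨆ j, a j) ≤ m0 := iSup_le fun j => (ha j).trans (hmle j)
  have hR : (⨆ j, b j) ≤ m0 := iSup_le fun j => (hb j).trans (hmle j)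
  have hX𝒜 : Measurable[⨆ j, a j] X := measurable_iff_comap_le.2 (le_iSup a none)
  have hY𝒜 : Measurable[⨆ j, a j] Y := by
    refine @measurable_pi_lambda _ _ _ (⨆ j, a j) _ _ fun i => ?_
    have hW𝒜 : Measurable[⨆ j, a j] (W i) := measurable_iff_comap_le.2 (le_iSup a (some i))
    have : (fun ω => Y ω i) = fun ω => r i * X ω + σ i * W i ω := funext (hξ i (r i))
    rw [this]
    exact (hX𝒜.const_mul _).add (hW𝒜.const_mul _)
  have hlawXY : P.map (fun ω => (X ω, Y ω)) = (ν.prod (Measure.pi fun i =>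
      gaussianReal 0 (Real.toNNReal (σ i ^ 2 * (r i - r i * r i))))).withDensity
        (fun p => ENNReal.ofReal (likelihood r σ p.1 p.2)) := by
    have h := map_prodMk_eq_withDensity (P := P) hr hσ (ν := ν) hX hWm (by
      rw [map_prodMk_eq_prod_pi hX hWm hindep hmle le_rfl fun i => hβle i _ (hr1 i), hlaw]
      simp only [hW_def, (hβ _).map_eq (hr1 _)])
    rw [← h]
    congr 1
    ext ω i
    · rfl
    · exact hξ i (r i) ω
  have hbayes : ∀ s, MeasurableSet[MeasurableSpace.comap Y inferInstance] s →
      ∫ ω in s, φ (X ω) ∂P = ∫ ω in s, G (Y ω) ∂P := by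
    rintro _ ⟨B, hB, rfl⟩
    have hXY : Measurable fun ω => (X ω, Y ω) := hX.prodMk hYm
    have : IsProbabilityMeasure (P.map fun ω => (X ω, Y ω)) :=
      Measure.isProbabilityMeasure_map hXY.aemeasurable
    have h := bayes_setIntegral measurable_likelihood likelihood_pos hlawXY hφm hφb hB
    rw [setIntegral_map (f := fun p : ℝ × (Fin n → ℝ) => φ p.1) (measurable_snd hB)
        (hφm.comp measurable_fst).aestronglyMeasurable hXY.aemeasurable] at h
    refine h.trans ?_
    exact setIntegral_map (f := fun p : ℝ × (Fin n → ℝ) => G p.2) (measurable_snd hB)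
        (hGm.comp measurable_snd).aestronglyMeasurable hXY.aemeasurable
  have hφi : Integrable (fun ω => φ (X ω)) P :=
    Integrable.of_bound (hφm.comp hX).aestronglyMeasurable C (ae_of_all _ fun ω => hφb _)
  have hGi : Integrable (fun ω => G (Y ω)) P :=
    Integrable.of_bound (hGm.comp hYm).aestronglyMeasurable C (ae_of_all _ fun ω => hGb _)
  have hbayes' := setIntegral_eq_of_indep_sup h𝒜 hY𝒜.comap_le hR hind (hφm.comp hX𝒜)
    (hGm.comp hY𝒜) hφi hGi hbayes
  have hβ0 : ∀ i, ∀ᵐ ω ∂P, β i 0 ω = 0 := by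
    intro i
    have hmap : P.map (β i 0) = Measure.dirac 0 := by
      rw [(hβ i).map_eq ⟨le_rfl, zero_le_one⟩]
      simp
    refine ae_of_ae_map (p := fun z => z = 0) ((hβ i).1 0).aemeasurable ?_
    rw [hmap]
    exact (ae_dirac_iff (p := fun z : ℝ => z = 0) (measurableSet_singleton 0)).2 rfl
  set mF : MeasurableSpace Ω := ⨆ i, ⨆ u ∈ Set.Icc (0:ℝ) t,
    MeasurableSpace.comap (fun ω => J i u * ξ i u ω) inferInstance with hmF_def
  have hFle : mF ≤ m0 := iSup_le fun i => iSup₂_le fun u _ => ((hξm i u).const_mul _).comap_le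
  -- An active observation splits as `ξ_u = (u / r) ξ_r + σ (β_u - (u / r) β_r)`.
  have hFsup : mF ≤ MeasurableSpace.comap Y inferInstance ⊔ ⨆ j, b j := by
    refine iSup_le fun i => iSup₂_le fun u hu => ?_
    refine Measurable.comap_le ?_
    rcases hJ01 i u with hJ | hJ
    · simp only [hJ, zero_mul]
      exact measurable_const
    have hu' : u ≤ r i := hur i u hu hJ
    have hYi : Measurable[MeasurableSpace.comap Y inferInstance ⊔ ⨆ j, b j] (fun ω => Y ω i) :=
      measurable_iff_comap_le.2 <| le_sup_of_le_left
        ((measurable_pi_apply i).comp (comap_measurable Y)).comap_le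
    have hRi : Measurable[MeasurableSpace.comap Y inferInstance ⊔ ⨆ j, b j]
        (fun ω => β i u ω - u / r i * β i (r i) ω) :=
      measurable_iff_comap_le.2 <| le_sup_of_le_right <| le_iSup_of_le (some i) <|
        le_iSup₂_of_le (f := fun s _ => MeasurableSpace.comap
          (fun ω => β i s ω - s / r i * β i (r i) ω) inferInstance) u ⟨hu.1, hu'⟩ le_rfl
    have hur' : u / r i * r i = u := by
      rcases eq_or_lt_of_le (hr0 i) with h0 | h0
      -- Here `u / r i = 0 / 0 = 0`, which is the value the decomposition needs.
      · have : u = 0 := le_antisymm (hu'.trans h0.ge) hu.1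
        simp [this]
      · exact div_mul_cancel₀ _ h0.ne'
    have heq : (fun ω => J i u * ξ i u ω) = fun ω => u / r i * Y ω i
        + σ i * (β i u ω - u / r i * β i (r i) ω) := by
      ext ω
      simp only [hJ, hY_def, hξ]
      linear_combination (-X ω) * hur'
    rw [heq]
    exact (hYi.const_mul _).add (hRi.const_mul _)
  have hξF : ∀ i, ∀ u ∈ Set.Icc (0:ℝ) t, J i u = 1 → Measurable[mF] (ξ i u) := by
    intro i u hu hJ
    have h : MeasurableSpace.comap (fun ω => J i u * ξ i u ω) inferInstance ≤ mF :=
      le_iSup_of_le i (le_iSup₂_of_le (f := fun u _ => MeasurableSpace.comap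
        (fun ω => J i u * ξ i u ω) inferInstance) u hu le_rfl)
    have h' := measurable_iff_comap_le.2 h
    simpa only [hJ, one_mul] using h'
  -- The supremum defining `τ` need not be attained, so `ξ_τ` is only a limit of active observations.
  have hYF : ∀ i, ∃ Z : Ω → ℝ, Measurable[mF] Z ∧ (fun ω => Y ω i) =ᵐ[P] Z := by
    intro i
    by_cases hS : {u ∈ Set.Icc (0:ℝ) t | J i u = 1}.Nonempty
    · obtain ⟨v, -, hv, hvmem⟩ := exists_seq_tendsto_sSup hS (hbdd i)
      have hsup : r i = sSup {u ∈ Set.Icc (0:ℝ) t | J i u = 1} := by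
        simp only [hr_def, hτ]
        exact max_eq_right (Real.sSup_nonneg fun u hu => hu.1.1)
      rw [← hsup] at hv
      refine ⟨fun ω => Y ω i, ?_, .rfl⟩
      refine @measurable_of_tendsto_metrizable _ _ mF _ _ _ _ (fun k => ξ i (v k)) _
        (fun k => hξF i _ (hvmem k).1 (hvmem k).2) (tendsto_pi_nhds.2 fun ω => ?_)
      have hcont := (hβ i).2.1 ω (r i) (hr1 i)
      have hv' : Tendsto v atTop (nhdsWithin (r i) (Set.Icc 0 1)) :=
        tendsto_nhdsWithin_iff.2 ⟨hv, Filter.Eventually.of_forall fun k =>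
          ⟨(hvmem k).1.1, (hvmem k).1.2.trans ht.2.le⟩⟩
      simp only [hY_def, hξ]
      exact (hv.mul_const _).add ((hcont.tendsto.comp hv').const_mul _)
    -- A source that was never active has `τ = 0`, and `ξ_0 = σ β_0` vanishes only almost surely.
    · have hr_zero : r i = 0 := by
        simp only [hr_def, hτ, Set.not_nonempty_iff_eq_empty.1 hS, Real.sSup_empty, max_self]
      refine ⟨fun _ => 0, @measurable_const _ _ _ mF _, ?_⟩
      filter_upwards [hβ0 i] with ω hω
      simp [hY_def, hξ, hr_zero, hω]
  choose Z hZm hZ using hYF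
  symm
  refine ae_eq_condExp_of_forall_setIntegral_eq hFle hφi (g := fun ω => G (Y ω))
    (fun s _ _ => hGi.integrableOn) (fun s hs _ => (hbayes' s (hFsup s hs)).symm) ?_
  have hZm' : Measurable[mF] (fun ω i => Z i ω) := @measurable_pi_lambda _ _ _ mF _ _ hZm
  refine ⟨fun ω => G (fun i => Z i ω), (hGm.comp hZm').stronglyMeasurable, ?_⟩
  filter_upwards [ae_all_iff.2 hZ] with ω hω
  rw [show Y ω = fun i => Z i ω from funext hω]

end
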